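/- (Kolmogorov's inequality) Let 0 < k < r be integers and f ∈ L^r_{∞,∞}. Then f^{(k)} is bounded and M_k(f) ≤ (‖φ_{r−k}‖ / ‖φ_r‖^{1−k/r}) · M_0(f)^{1−k/r} · M_r(f)^{k/r}. -/

import Mathlib

open MeasureTheory Filter

noncomputable section

/-- The uniform norm `‖f‖ = sup_{t ∈ ℝ} |f t|` of a function `f : ℝ → ℝ`. -/
def unif (f : ℝ → ℝ) : ℝ := ⨆ t : ℝ, |f t|

/-- `M k f = ‖f⁽ᵏ⁾‖`, the uniform norm of the `k`-th derivative of `f`. -/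
def M (k : ℕ) (f : ℝ → ℝ) : ℝ := unif (iteratedDeriv k f)

/-- The class `L^r_{∞,∞}`: bounded functions `f : ℝ → ℝ` having `r-1` (continuous)
derivatives, with `f⁽ʳ⁻¹⁾` locally absolutely continuous and `f⁽ʳ⁾` essentially bounded;
the last two conditions are equivalent to `f⁽ʳ⁻¹⁾` being Lipschitz. -/
def MemL (r : ℕ) (f : ℝ → ℝ) : Prop :=
  Continuous f ∧ (∃ C : ℝ, ∀ t : ℝ, |f t| ≤ C) ∧ ContDiff ℝ (r - 1 : ℕ) f ∧
    ∃ K : NNReal, LipschitzWith K (iteratedDeriv (r - 1) f)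

/-- The Euler perfect spline `φ_r`: the `r`-th `2π`-periodic antiderivative with zero
mean value of `t ↦ sgn (sin t)`. -/
def eulerPhi : ℕ → ℝ → ℝ
  | 0 => fun t => Real.sign (Real.sin t)
  | (s + 1) => fun t =>
      (∫ x in (0:ℝ)..t, eulerPhi s x) -
        (1 / (2 * Real.pi)) * ∫ x in (0:ℝ)..(2 * Real.pi), ∫ u in (0:ℝ)..x, eulerPhi s u

/-- `φ_{λ,r}(t) = λ^{-r} φ_r (λ t)`. -/
def eulerPhiL (lam : ℝ) (r : ℕ) (t : ℝ) : ℝ := lam ^ (-(r : ℤ)) * eulerPhi r (lam * t)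

/-- The basic step function: `0` on `[0,a]`, `1` on `(a, a+b]`, `0` after `a+b`. -/
def psiBase (a b : ℝ) (t : ℝ) : ℝ := if t ≤ a then 0 else if t ≤ a + b then 1 else 0

/-- `psiBase` continued evenly with respect to the point `a+b+c`. -/
def psiHalf (a b c t : ℝ) : ℝ :=
  if t ≤ a + b + c then psiBase a b t else psiBase a b (2 * (a + b + c) - t)

/-- The Rodov step function `ψ_0(a,b,c)`: equal to `psiBase` on `[0, a+b+c]`, continued
evenly with respect to `a+b+c`, then oddly with respect to `2(a+b+c)`, then
`4(a+b+c)`-periodically. -/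
def psiZero (a b c t : ℝ) : ℝ :=
  if (t - 4 * (a + b + c) * ⌊t / (4 * (a + b + c))⌋) ≤ 2 * (a + b + c) then
    psiHalf a b c (t - 4 * (a + b + c) * ⌊t / (4 * (a + b + c))⌋)
  else
    -psiHalf a b c (4 * (a + b + c) - (t - 4 * (a + b + c) * ⌊t / (4 * (a + b + c))⌋))

/-- `ψ_s(a,b,c)`: the `s`-th periodic antiderivative of `ψ_0(a,b,c)` with zero mean
value over the period `[0, 4(a+b+c)]`. -/
def psi : ℕ → ℝ → ℝ → ℝ → ℝ → ℝ
  | 0 => psiZero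
  | (s + 1) => fun a b c t =>
      (∫ x in (0:ℝ)..t, psi s a b c x) -
        (1 / (4 * (a + b + c))) *
          ∫ x in (0:ℝ)..(4 * (a + b + c)), ∫ u in (0:ℝ)..x, psi s a b c u

/-- The modulus of continuity `ω(D^k, X; δ) = sup {‖f⁽ᵏ⁾‖ : f ∈ X, ‖f‖ ≤ δ}` of the
differentiation operator `D^k` on a class `X`. -/
def omegaMod (k : ℕ) (X : Set (ℝ → ℝ)) (δ : ℝ) : ℝ :=
  sSup {y : ℝ | ∃ f ∈ X, M 0 f ≤ δ ∧ M k f = y}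

end

/-!
After rescaling we may assume `‖f⁽ʳ⁾‖ ≤ 1` and `‖f‖ ≤ ‖φ_r‖`. Let `Φ_n` be the translate of `φ_n`
which increases on `[-π/2, π/2]`. Kolmogorov's comparison principle says that `f = Φ_r ∘ θ` for a
1-Lipschitz phase `θ` with values in `[-π/2, π/2]`. It passes from `f'` to `f` by induction on `r`.

If `f' = Φ_n ∘ θ` with `θ` 1-Lipschitz, then moving from `ξ` in the direction in which `|f|` grows,
`f` gains at least as much as `Φ_{n+1}` does on the last stretch of length `|θ ξ|` before its peak:
`|f ξ| + ‖Φ_{n+1}‖ ≤ ‖f‖ + Φ_{n+1} (π/2 - |θ ξ|)`. For `‖f‖ ≤ ‖Φ_{n+1}‖` this bounds `|f' ξ|` by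
the slope of `Φ_{n+1}` at the level `f ξ`, which is the comparison principle for `f`. For
`‖f‖ < ‖Φ_{n+1}‖` it gives `‖f'‖ < ‖Φ_n‖`, and by rescaling this also rules out `‖f'‖ > ‖Φ_n‖`, so
that the induction hypothesis does apply to `f'`.
-/

section

open Set
open scoped Real NNReal

/-! ### Euler splines -/

lemma measurable_real_sign : Measurable Real.sign :=
  measurable_const.ite measurableSet_Iio (measurable_const.ite measurableSet_Ioi measurable_const)

lemma abs_real_sign_le_one (x : ℝ) : |Real.sign x| ≤ 1 := by
  rcases Real.sign_apply_eq x with h | h | h <;> simp [h]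

lemma antiperiodic_of_integral_eq_sub {F g : ℝ → ℝ} {T : ℝ} (hT : T ≠ 0) (hF : Continuous F)
    (hFg : ∀ a b, ∫ x in a..b, g x = F b - F a) (hg : Function.Antiperiodic g T)
    (hmean : ∫ x in (0 : ℝ)..2 * T, F x = 0) : Function.Antiperiodic F T := by
  have hsum (t : ℝ) : F (t + T) + F t = F T + F 0 := by
    have hshift : F (t + T) - F (0 + T) = -(F t - F 0) := by
      rw [← hFg, ← hFg, ← intervalIntegral.integral_comp_add_right, ← intervalIntegral.integral_neg]
      simp only [hg _]
    rw [zero_add] at hshift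
    linarith
  have hmul : T * (F T + F 0) = 0 := calc
    T * (F T + F 0) = ∫ x in (0 : ℝ)..T, (F (x + T) + F x) := by
      simp only [hsum, intervalIntegral.integral_const, sub_zero, smul_eq_mul]
    _ = (∫ x in T..2 * T, F x) + ∫ x in (0 : ℝ)..T, F x := by
      have hFT : Continuous fun x => F (x + T) := by fun_prop
      rw [intervalIntegral.integral_add (hFT.intervalIntegrable _ _) (hF.intervalIntegrable _ _),
        intervalIntegral.integral_comp_add_right, zero_add, two_mul]
    _ = 0 := by
      rw [add_comm, intervalIntegral.integral_add_adjacent_intervals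
        (hF.intervalIntegrable _ _) (hF.intervalIntegrable _ _), hmean]
  intro t
  linarith [hsum t, (mul_eq_zero.1 hmul).resolve_left hT]

lemma intervalIntegrable_eulerPhi (n : ℕ) (a b : ℝ) :
    IntervalIntegrable (eulerPhi n) volume a b := by
  induction n generalizing a b with
  | zero =>
    refine (intervalIntegrable_const (c := (1 : ℝ))).mono_fun
      (measurable_real_sign.comp Real.measurable_sin).aestronglyMeasurable (.of_forall fun x => ?_)
    simpa [eulerPhi] using abs_real_sign_le_one (Real.sin x)
  | succ n ih =>
    exact ((intervalIntegral.continuous_primitive ih 0).sub continuous_const).intervalIntegrable a b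

lemma continuous_eulerPhi_succ (n : ℕ) : Continuous (eulerPhi (n + 1)) :=
  (intervalIntegral.continuous_primitive (intervalIntegrable_eulerPhi n) 0).sub continuous_const

lemma integral_eulerPhi (n : ℕ) (a b : ℝ) :
    ∫ x in a..b, eulerPhi n x = eulerPhi (n + 1) b - eulerPhi (n + 1) a := by
  rw [← intervalIntegral.integral_interval_sub_left
    (intervalIntegrable_eulerPhi n 0 b) (intervalIntegrable_eulerPhi n 0 a)]
  simp only [eulerPhi, sub_sub_sub_cancel_right]

lemma integral_eulerPhi_succ_period (n : ℕ) :
    ∫ x in (0 : ℝ)..2 * π, eulerPhi (n + 1) x = 0 := by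
  have hprim := intervalIntegral.continuous_primitive (intervalIntegrable_eulerPhi n) 0
  simp only [eulerPhi]
  rw [intervalIntegral.integral_sub (hprim.intervalIntegrable _ _) intervalIntegrable_const,
    intervalIntegral.integral_const, smul_eq_mul, sub_zero, ← mul_assoc,
    mul_one_div_cancel Real.two_pi_pos.ne', one_mul, sub_self]

lemma antiperiodic_eulerPhi (n : ℕ) : Function.Antiperiodic (eulerPhi n) π := by
  induction n with
  | zero => intro t; simp [eulerPhi, Real.sin_add_pi, Real.sign_neg]
  | succ n ih =>
    exact antiperiodic_of_integral_eq_sub Real.pi_ne_zero (continuous_eulerPhi_succ n)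
      (integral_eulerPhi n) ih (integral_eulerPhi_succ_period n)

/-- The centered Euler spline `Φ_n`: the spline `φ_n` translated so that it is odd and, for `n ≥ 1`,
increases from `-‖φ_n‖` to `‖φ_n‖` on `[-π/2, π/2]`. -/
noncomputable def centeredEuler (n : ℕ) (t : ℝ) : ℝ := eulerPhi n (t + n * (π / 2))

lemma continuous_centeredEuler_succ (n : ℕ) : Continuous (centeredEuler (n + 1)) :=
  (continuous_eulerPhi_succ n).comp (continuous_add_const _)

lemma antiperiodic_centeredEuler (n : ℕ) : Function.Antiperiodic (centeredEuler n) π :=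
  (antiperiodic_eulerPhi n).add_const _

lemma centeredEuler_add_pi_div_two (n : ℕ) (t : ℝ) :
    centeredEuler n (t + π / 2) = eulerPhi n (t + (n + 1 : ℕ) * (π / 2)) := by
  rw [centeredEuler]
  congr 1
  push_cast
  ring

lemma integral_centeredEuler_add_pi_div_two (n : ℕ) (a b : ℝ) :
    ∫ x in a..b, centeredEuler n (x + π / 2) =
      centeredEuler (n + 1) b - centeredEuler (n + 1) a := by
  simp only [centeredEuler_add_pi_div_two]
  rw [intervalIntegral.integral_comp_add_right, integral_eulerPhi, centeredEuler, centeredEuler]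

lemma hasDerivAt_centeredEuler (n : ℕ) (t : ℝ) :
    HasDerivAt (centeredEuler (n + 2)) (centeredEuler (n + 1) (t + π / 2)) t := by
  have hcont : Continuous fun x => centeredEuler (n + 1) (x + π / 2) :=
    (continuous_centeredEuler_succ n).comp (continuous_add_const _)
  have hprim : centeredEuler (n + 2) = fun x =>
      (∫ u in (0 : ℝ)..x, centeredEuler (n + 1) (u + π / 2)) + centeredEuler (n + 2) 0 := by
    funext x
    rw [integral_centeredEuler_add_pi_div_two, sub_add_cancel]
  rw [hprim]
  exact (hcont.integral_hasStrictDerivAt 0 t).hasDerivAt.add_const _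

-- Evenness of `t ↦ Φ_n (t + π/2)` makes `Φ_{n+1}` odd up to a constant, and antiperiodicity
-- forces that constant to vanish.
lemma odd_centeredEuler (n : ℕ) : Function.Odd (centeredEuler n) := by
  induction n with
  | zero => intro t; simp [centeredEuler, eulerPhi, Real.sin_neg, Real.sign_neg]
  | succ n ih =>
    have heven (x : ℝ) : centeredEuler n (-x + π / 2) = centeredEuler n (x + π / 2) := by
      rw [show -x + π / 2 = -(x + π / 2) + π by ring, antiperiodic_centeredEuler n, ih, neg_neg]
    have hsum (t : ℝ) :
        centeredEuler (n + 1) t + centeredEuler (n + 1) (-t) = 2 * centeredEuler (n + 1) 0 := by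
      have hreflect := intervalIntegral.integral_comp_neg (a := 0) (b := t)
        fun x => centeredEuler n (x + π / 2)
      simp only [heven, integral_centeredEuler_add_pi_div_two, neg_zero] at hreflect
      linarith
    have hanti := antiperiodic_centeredEuler (n + 1) (-(π / 2))
    rw [show -(π / 2) + π = π / 2 by ring] at hanti
    intro t
    linarith [hsum t, hsum (π / 2)]

lemma centeredEuler_zero (n : ℕ) : centeredEuler n 0 = 0 :=
  (odd_centeredEuler n).map_zero

lemma centeredEuler_pi_sub (n : ℕ) (t : ℝ) : centeredEuler n (π - t) = centeredEuler n t := by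
  rw [sub_eq_neg_add, antiperiodic_centeredEuler n, odd_centeredEuler n, neg_neg]

lemma centeredEuler_pi_div_two_sub_abs (n : ℕ) (t : ℝ) :
    centeredEuler n (π / 2 - |t|) = centeredEuler n (t + π / 2) := by
  rcases abs_cases t with ⟨h, -⟩ | ⟨h, -⟩ <;> rw [h]
  · rw [← centeredEuler_pi_sub]
    congr 1
    ring
  · congr 1
    ring

lemma strictMonoOn_centeredEuler_of_pos {n : ℕ} (hpos : ∀ t ∈ Ioo 0 π, 0 < centeredEuler n t) :
    StrictMonoOn (centeredEuler (n + 1)) (Icc (-(π / 2)) (π / 2)) := by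
  intro a ha b hb hab
  have hint : IntervalIntegrable (fun x => centeredEuler n (x + π / 2)) volume a b := by
    simp only [centeredEuler_add_pi_div_two]
    rw [← add_sub_cancel_right a ((n + 1 : ℕ) * (π / 2)),
      ← add_sub_cancel_right b ((n + 1 : ℕ) * (π / 2))]
    exact (intervalIntegrable_eulerPhi n _ _).comp_add_right _
  rw [← sub_pos, ← integral_centeredEuler_add_pi_div_two]
  exact intervalIntegral.intervalIntegral_pos_of_pos_on hint
    (fun x hx => hpos _ ⟨by linarith [ha.1, hx.1], by linarith [hb.2, hx.2]⟩) hab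

lemma centeredEuler_pos (n : ℕ) {t : ℝ} (ht : t ∈ Ioo 0 π) : 0 < centeredEuler n t := by
  induction n generalizing t with
  | zero => simp [centeredEuler, eulerPhi, Real.sign_of_pos (Real.sin_pos_of_mem_Ioo ht)]
  | succ n ih =>
    have hpos {s : ℝ} (hs0 : 0 < s) (hs : s ≤ π / 2) : 0 < centeredEuler (n + 1) s := by
      rw [← centeredEuler_zero (n + 1)]
      exact strictMonoOn_centeredEuler_of_pos (fun _ => ih)
        ⟨by linarith, by linarith⟩ ⟨by linarith, hs⟩ hs0
    rcases le_total t (π / 2) with h | h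
    · exact hpos ht.1 h
    · rw [← centeredEuler_pi_sub]
      exact hpos (by linarith [ht.2]) (by linarith)

lemma centeredEuler_pi_div_two_pos (n : ℕ) : 0 < centeredEuler n (π / 2) :=
  centeredEuler_pos n ⟨Real.pi_div_two_pos, by linarith [Real.pi_pos]⟩

lemma strictMonoOn_centeredEuler (n : ℕ) :
    StrictMonoOn (centeredEuler (n + 1)) (Icc (-(π / 2)) (π / 2)) :=
  strictMonoOn_centeredEuler_of_pos fun _ => centeredEuler_pos n

lemma abs_centeredEuler {n : ℕ} {t : ℝ} (ht : t ∈ Icc (-(π / 2)) (π / 2)) :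
    |centeredEuler n t| = centeredEuler n |t| := by
  have hnonneg {s : ℝ} (hs0 : 0 ≤ s) (hs : s ≤ π / 2) : 0 ≤ centeredEuler n s := by
    rcases hs0.eq_or_lt with rfl | h
    · exact (centeredEuler_zero n).ge
    · exact (centeredEuler_pos n ⟨h, by linarith [Real.pi_pos]⟩).le
  rcases le_total 0 t with h | h
  · rw [abs_of_nonneg h, abs_of_nonneg (hnonneg h ht.2)]
  · rw [abs_of_nonpos h, ← abs_neg, ← odd_centeredEuler n,
      abs_of_nonneg (hnonneg (neg_nonneg.2 h) (by linarith [ht.1]))]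

lemma abs_centeredEuler_le {n : ℕ} {t : ℝ} (ht : t ∈ Icc (-(π / 2)) (π / 2)) :
    |centeredEuler (n + 1) t| ≤ centeredEuler (n + 1) (π / 2) := by
  have habs : |t| ≤ π / 2 := abs_le.2 ht
  rw [abs_centeredEuler ht]
  exact (strictMonoOn_centeredEuler n).monotoneOn ⟨by linarith [abs_nonneg t, Real.pi_pos], habs⟩
    ⟨by linarith [Real.pi_pos], le_rfl⟩ habs

lemma exists_centeredEuler_eq {n : ℕ} {y : ℝ} (hy : |y| ≤ centeredEuler (n + 1) (π / 2)) :
    ∃ t ∈ Icc (-(π / 2)) (π / 2), centeredEuler (n + 1) t = y := by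
  have hivt := intermediate_value_Icc (neg_le_self Real.pi_div_two_pos.le)
    (continuous_centeredEuler_succ n).continuousOn
  rw [odd_centeredEuler (n + 1)] at hivt
  exact hivt (abs_le.1 hy)

lemma centeredEuler_one {t : ℝ} (ht : t ∈ Icc (-(π / 2)) (π / 2)) : centeredEuler 1 t = t := by
  have hone : EqOn (fun x => centeredEuler 0 (x + π / 2)) (fun _ => 1) (uIoo 0 t) := by
    intro x hx
    have hx' : x ∈ Ioo (-(π / 2)) (π / 2) :=
      ⟨(le_min (neg_nonpos.2 Real.pi_div_two_pos.le) ht.1).trans_lt hx.1,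
        hx.2.trans_le (max_le Real.pi_div_two_pos.le ht.2)⟩
    simp [centeredEuler, eulerPhi, Real.sin_add_pi_div_two,
      Real.sign_of_pos (Real.cos_pos_of_mem_Ioo hx')]
  calc centeredEuler 1 t = ∫ x in (0 : ℝ)..t, centeredEuler 0 (x + π / 2) := by
        rw [integral_centeredEuler_add_pi_div_two, centeredEuler_zero, sub_zero]
    _ = ∫ _ in (0 : ℝ)..t, (1 : ℝ) := intervalIntegral.integral_congr_uIoo hone
    _ = t := by simp

lemma unif_eulerPhi_succ (n : ℕ) : unif (eulerPhi (n + 1)) = centeredEuler (n + 1) (π / 2) := by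
  have hle (t : ℝ) : |eulerPhi (n + 1) t| ≤ centeredEuler (n + 1) (π / 2) := by
    have hper : Function.Periodic (fun t => |centeredEuler (n + 1) t|) π := fun t => by
      simp only [antiperiodic_centeredEuler (n + 1) t, abs_neg]
    obtain ⟨s, hs, hts⟩ := hper.exists_mem_Ico Real.pi_pos (t - (n + 1 : ℕ) * (π / 2)) (-(π / 2))
    have hcentered : eulerPhi (n + 1) t = centeredEuler (n + 1) (t - (n + 1 : ℕ) * (π / 2)) := by
      rw [centeredEuler, sub_add_cancel]
    rw [hcentered, hts]
    exact abs_centeredEuler_le ⟨hs.1, by linarith [hs.2]⟩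
  refine le_antisymm (ciSup_le hle) ((le_abs_self _).trans ?_)
  exact le_ciSup (f := fun t => |eulerPhi (n + 1) t|) ⟨_, forall_mem_range.2 hle⟩ _

/-! ### Phases with respect to the Euler splines -/

-- If `η` grew by more than `y - x`, the curve `t ↦ Φ (η x + ε + (1 + ε) (t - x))` would fence `f`
-- from above on `[x, y]` and still end below `f y`. Starting it at `η x + ε` keeps it away from
-- `l`, where the derivative of `Φ` may vanish.
lemma sub_le_sub_of_eq_comp_of_deriv_le {f Φ Φ' η : ℝ → ℝ} {l u x y : ℝ}
    (hΦ : ∀ s, HasDerivAt Φ (Φ' s) s) (hpos : ∀ s ∈ Ioo l u, 0 < Φ' s)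
    (hf : Differentiable ℝ f) (hη : ∀ t, η t ∈ Icc l u) (hfη : ∀ t, f t = Φ (η t))
    (hle : ∀ t, deriv f t ≤ Φ' (η t)) (hxy : x ≤ y) : η y - η x ≤ y - x := by
  have hmono : StrictMonoOn Φ (Icc l u) :=
    strictMonoOn_of_deriv_pos (convex_Icc l u) (fun s _ => (hΦ s).continuousAt.continuousWithinAt)
      fun s hs => (hΦ s).deriv ▸ hpos s (interior_Icc (a := l) (b := u) ▸ hs)
  by_contra! hgap
  obtain ⟨ε, hε0, hε⟩ := exists_pos_mul_lt (sub_pos.2 hgap) (1 + (y - x))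
  set s : ℝ → ℝ := fun t => η x + ε + (1 + ε) * (t - x) with hs
  have hsy : s y < η y := by simp only [hs]; linarith
  have hsmem (t : ℝ) (ht : t ∈ Icc x y) : s t ∈ Ioo l u := by
    have hlow : 0 ≤ (1 + ε) * (t - x) := mul_nonneg (by linarith) (by linarith [ht.1])
    have hupp : (1 + ε) * (t - x) ≤ (1 + ε) * (y - x) := by gcongr; exact ht.2
    simp only [hs] at hsy ⊢
    exact ⟨by linarith [(hη x).1], by linarith [(hη y).2]⟩
  have hs' (t : ℝ) : HasDerivAt s (1 + ε) t := by
    simpa only [mul_one, id] using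
      (((hasDerivAt_id t).sub_const x).const_mul (1 + ε)).const_add (η x + ε)
  have hstart : f x ≤ Φ (s x) := by
    rw [hfη x]
    exact hmono.monotoneOn (hη x) (Ioo_subset_Icc_self (hsmem x ⟨le_rfl, hxy⟩))
      (by simp [hs, hε0.le])
  have hfence := image_le_of_deriv_right_lt_deriv_boundary hf.continuous.continuousOn
    (fun t _ => (hf t).hasDerivAt.hasDerivWithinAt) hstart (fun t => (hΦ (s t)).comp t (hs' t))
    fun t ht hft => by
      have hst := hsmem t (Ico_subset_Icc_self ht)
      have heq : η t = s t :=
        hmono.injOn (hη t) (Ioo_subset_Icc_self hst) ((hfη t).symm.trans hft)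
      exact (heq ▸ hle t).trans_lt (lt_mul_of_one_lt_right (hpos _ hst) (by linarith))
  have hend := hmono (Ioo_subset_Icc_self (hsmem y ⟨hxy, le_rfl⟩)) (hη y) hsy
  exact hend.not_ge (hfη y ▸ hfence ⟨hxy, le_rfl⟩)

lemma lipschitzWith_one_of_eq_comp_of_abs_deriv_le {f Φ Φ' η : ℝ → ℝ} {l u : ℝ}
    (hΦ : ∀ s, HasDerivAt Φ (Φ' s) s) (hpos : ∀ s ∈ Ioo l u, 0 < Φ' s)
    (hf : Differentiable ℝ f) (hη : ∀ t, η t ∈ Icc l u) (hfη : ∀ t, f t = Φ (η t))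
    (hle : ∀ t, |deriv f t| ≤ Φ' (η t)) : LipschitzWith 1 η := by
  have hforward {x y : ℝ} (hxy : x ≤ y) : η y - η x ≤ y - x :=
    sub_le_sub_of_eq_comp_of_deriv_le hΦ hpos hf hη hfη (fun t => (le_abs_self _).trans (hle t)) hxy
  have hbackward {x y : ℝ} (hxy : x ≤ y) : η x - η y ≤ y - x := by
    have hreflect := sub_le_sub_of_eq_comp_of_deriv_le (f := fun t => f (-t)) (η := fun t => η (-t))
      hΦ hpos (by fun_prop) (fun t => hη (-t)) (fun t => hfη (-t))
      (fun t => by rw [deriv_comp_neg]; exact (neg_le_abs _).trans (hle (-t)))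
      (neg_le_neg hxy)
    simpa [neg_neg, add_comm, sub_eq_add_neg] using hreflect
  refine LipschitzWith.of_le_add fun x y => ?_
  rw [Real.dist_eq]
  rcases le_total x y with hxy | hxy
  · linarith [hbackward hxy, neg_le_abs (x - y)]
  · linarith [hforward hxy, le_abs_self (x - y)]

/-- `θ` is a *phase* of `g` of order `n`: reading `g = Φ_n ∘ θ` on the increasing branch of the
centered Euler spline `Φ_n`, the phase `θ` moves with speed at most one. This is Kolmogorov's
comparison property: where `g` and `Φ_n` take the same value, `g` is no steeper than `Φ_n`. -/
structure IsEulerPhase (n : ℕ) (g θ : ℝ → ℝ) : Prop where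
  lipschitz : LipschitzWith 1 θ
  mem_Icc : ∀ t, θ t ∈ Icc (-(π / 2)) (π / 2)
  eq : ∀ t, g t = centeredEuler n (θ t)

namespace IsEulerPhase

variable {n : ℕ} {f g θ : ℝ → ℝ} {q : ℝ}

lemma neg (h : IsEulerPhase n g θ) : IsEulerPhase n (-g) (-θ) where
  lipschitz := h.lipschitz.neg
  mem_Icc t := by simpa [and_comm, neg_le] using h.mem_Icc t
  eq t := by rw [Pi.neg_apply, Pi.neg_apply, odd_centeredEuler n, h.eq]

lemma comp_neg (h : IsEulerPhase n g θ) :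
    IsEulerPhase n (fun t => g (-t)) (fun t => θ (-t)) where
  lipschitz := mul_one (1 : ℝ≥0) ▸ h.lipschitz.comp LipschitzWith.id.neg
  mem_Icc t := h.mem_Icc (-t)
  eq t := h.eq (-t)

lemma abs_eq (h : IsEulerPhase n g θ) (t : ℝ) : |g t| = centeredEuler n |θ t| := by
  rw [h.eq, abs_centeredEuler (h.mem_Icc t)]

lemma abs_mem_Icc (h : IsEulerPhase n g θ) (t : ℝ) : |θ t| ∈ Icc (-(π / 2)) (π / 2) :=
  ⟨by linarith [abs_nonneg (θ t), Real.pi_pos], abs_le.2 (h.mem_Icc t)⟩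

-- For `0 ≤ t ≤ θ ξ` the phase of `f'` at `ξ + t` is at least `θ ξ - t`, so on `[ξ, ξ + θ ξ]` the
-- function `f` gains at least as much as the spline does from `π / 2 - θ ξ` to its peak at `π / 2`.
lemma add_le_apply_add (hf : Differentiable ℝ f) (hθ : IsEulerPhase (n + 1) (deriv f) θ) {ξ : ℝ}
    (hξ : 0 ≤ θ ξ) :
    f ξ + centeredEuler (n + 2) (π / 2) ≤
      f (ξ + θ ξ) + centeredEuler (n + 2) (π / 2 - θ ξ) := by
  set b := θ ξ
  have hd (t : ℝ) : HasDerivAt (fun t => f (ξ + t) - centeredEuler (n + 2) (π / 2 - b + t))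
      (deriv f (ξ + t) - centeredEuler (n + 1) (b - t)) t := by
    have hspline := (hasDerivAt_centeredEuler n (π / 2 - b + t)).comp_const_add _ t
    rw [show π / 2 - b + t + π / 2 = π - (b - t) by ring, centeredEuler_pi_sub] at hspline
    exact ((hf (ξ + t)).hasDerivAt.comp_const_add ξ t).sub hspline
  have hmono : MonotoneOn (fun t => f (ξ + t) - centeredEuler (n + 2) (π / 2 - b + t))
      (Icc 0 b) := by
    refine monotoneOn_of_deriv_nonneg (convex_Icc 0 b)
      (fun t _ => (hd t).continuousAt.continuousWithinAt)
      (fun t _ => (hd t).differentiableAt.differentiableWithinAt) fun t ht => ?_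
    rw [interior_Icc] at ht
    have hphase : b - t ≤ θ (ξ + t) := by
      have hlip := hθ.lipschitz.le_add_mul ξ (ξ + t)
      simp only [NNReal.coe_one, one_mul, dist_self_add_right, Real.norm_eq_abs,
        abs_of_pos ht.1] at hlip
      linarith
    rw [(hd t).deriv, sub_nonneg, hθ.eq]
    exact (strictMonoOn_centeredEuler n).monotoneOn
      ⟨by linarith [ht.2, Real.pi_pos], by linarith [ht.1, (hθ.mem_Icc ξ).2]⟩
      (hθ.mem_Icc _) hphase
  have hgain := hmono (left_mem_Icc.2 hξ) (right_mem_Icc.2 hξ) hξ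
  simp only [add_zero, sub_add_cancel] at hgain
  linarith

lemma abs_add_le_of_nonneg (hf : Differentiable ℝ f) (hθ : IsEulerPhase (n + 1) (deriv f) θ)
    (hq : ∀ t, |f t| ≤ q) {ξ : ℝ} (hξ : 0 ≤ θ ξ) :
    |f ξ| + centeredEuler (n + 2) (π / 2) ≤ q + centeredEuler (n + 2) (π / 2 - θ ξ) := by
  have hright := add_le_apply_add hf hθ hξ
  have hreflect : deriv (fun t => -f (-t)) = fun t => deriv f (-t) := by
    funext t
    rw [deriv.fun_neg, deriv_comp_neg, neg_neg]
  have hleft := add_le_apply_add (f := fun t => -f (-t)) (ξ := -ξ) (by fun_prop)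
    (hreflect ▸ hθ.comp_neg) (by rwa [neg_neg])
  simp only [neg_neg] at hleft
  rcases abs_cases (f ξ) with ⟨h, -⟩ | ⟨h, -⟩ <;> rw [h]
  · linarith [le_of_abs_le (hq (ξ + θ ξ))]
  · linarith [neg_le_of_abs_le (hq (-(-ξ + θ ξ)))]

lemma abs_add_le (hf : Differentiable ℝ f) (hθ : IsEulerPhase (n + 1) (deriv f) θ)
    (hq : ∀ t, |f t| ≤ q) (ξ : ℝ) :
    |f ξ| + centeredEuler (n + 2) (π / 2) ≤ q + centeredEuler (n + 2) (π / 2 - |θ ξ|) := by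
  rcases abs_cases (θ ξ) with ⟨h, hξ⟩ | ⟨h, hξ⟩ <;> rw [h]
  · exact abs_add_le_of_nonneg hf hθ hq hξ
  · have hneg : IsEulerPhase (n + 1) (deriv (-f)) (-θ) := by
      rw [deriv.neg']
      exact hθ.neg
    simpa using abs_add_le_of_nonneg hf.neg hneg (by simpa using hq) (neg_nonneg.2 hξ.le)

lemma exists_abs_deriv_le_lt (hf : Differentiable ℝ f) (hθ : IsEulerPhase (n + 1) (deriv f) θ)
    (hq : ∀ t, |f t| ≤ q) (hlt : q < centeredEuler (n + 2) (π / 2)) :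
    ∃ q' < centeredEuler (n + 1) (π / 2), ∀ t, |deriv f t| ≤ q' := by
  have hπ := Real.pi_pos
  have hq0 : 0 ≤ q := (abs_nonneg _).trans (hq 0)
  obtain ⟨p, hp, hpeq⟩ := exists_centeredEuler_eq (n := n + 1)
    (y := centeredEuler (n + 2) (π / 2) - q) (by rw [abs_of_pos (sub_pos.2 hlt)]; linarith)
  have hp0 : 0 < p := by
    rw [← (strictMonoOn_centeredEuler (n + 1)).lt_iff_lt ⟨by linarith, by linarith⟩ hp,
      centeredEuler_zero, hpeq]
    exact sub_pos.2 hlt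
  have hp' : π / 2 - p ∈ Icc (-(π / 2)) (π / 2) := ⟨by linarith [hp.2], by linarith⟩
  refine ⟨centeredEuler (n + 1) (π / 2 - p),
    strictMonoOn_centeredEuler n hp' ⟨by linarith, le_rfl⟩ (by linarith), fun t => ?_⟩
  have hθp : p ≤ π / 2 - |θ t| := by
    rw [← (strictMonoOn_centeredEuler (n + 1)).le_iff_le hp
      ⟨by linarith [(hθ.abs_mem_Icc t).2], by linarith [abs_nonneg (θ t)]⟩, hpeq]
    linarith [abs_add_le hf hθ hq t, abs_nonneg (f t)]
  rw [hθ.abs_eq]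
  exact (strictMonoOn_centeredEuler n).monotoneOn (hθ.abs_mem_Icc t) hp' (by linarith)

lemma abs_deriv_le (hf : Differentiable ℝ f) (hθ : IsEulerPhase (n + 1) (deriv f) θ)
    (hq : ∀ t, |f t| ≤ centeredEuler (n + 2) (π / 2)) {ξ s : ℝ}
    (hs : s ∈ Icc (-(π / 2)) (π / 2)) (hfs : f ξ = centeredEuler (n + 2) s) :
    |deriv f ξ| ≤ centeredEuler (n + 1) (s + π / 2) := by
  have hπ := Real.pi_pos
  have hs' : |s| ≤ π / 2 := abs_le.2 hs
  have hθπ := (hθ.abs_mem_Icc ξ).2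
  have hsum : |s| ≤ π / 2 - |θ ξ| := by
    rw [← (strictMonoOn_centeredEuler (n + 1)).le_iff_le
      ⟨by linarith [abs_nonneg s], hs'⟩ ⟨by linarith, by linarith [abs_nonneg (θ ξ)]⟩,
      ← abs_centeredEuler hs, ← hfs]
    linarith [abs_add_le hf hθ hq ξ]
  rw [hθ.abs_eq, ← centeredEuler_pi_div_two_sub_abs]
  exact (strictMonoOn_centeredEuler n).monotoneOn (hθ.abs_mem_Icc ξ)
    ⟨by linarith, by linarith [abs_nonneg s]⟩ (by linarith)

lemma exists_of_deriv (hf : Differentiable ℝ f) (hθ : IsEulerPhase (n + 1) (deriv f) θ)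
    (hq : ∀ t, |f t| ≤ centeredEuler (n + 2) (π / 2)) : ∃ η, IsEulerPhase (n + 2) f η := by
  choose η hη hηeq using fun t => exists_centeredEuler_eq (n := n + 1) (hq t)
  have hpos (s : ℝ) (hs : s ∈ Ioo (-(π / 2)) (π / 2)) : 0 < centeredEuler (n + 1) (s + π / 2) :=
    centeredEuler_pos (n + 1) ⟨by linarith [hs.1], by linarith [hs.2]⟩
  have hlip : LipschitzWith 1 η :=
    lipschitzWith_one_of_eq_comp_of_abs_deriv_le (hasDerivAt_centeredEuler n) hpos hf hη
      (fun t => (hηeq t).symm) fun t => abs_deriv_le hf hθ hq (hη t) (hηeq t).symm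
  exact ⟨η, hlip, hη, fun t => (hηeq t).symm⟩

end IsEulerPhase

/-! ### The comparison principle -/

lemma iteratedDeriv_const_mul_comp_mul {n : ℕ} {f : ℝ → ℝ} (hf : ContDiff ℝ n f) (a c : ℝ) :
    iteratedDeriv n (fun t => a * f (c * t)) =
      fun t => a * (c ^ n * iteratedDeriv n f (c * t)) := by
  funext t
  rw [iteratedDeriv_const_mul_field, iteratedDeriv_comp_const_mul hf]

lemma iteratedDeriv_comp_add_const_sub {n : ℕ} {f : ℝ → ℝ} (hf : ContDiff ℝ n f) (a : ℝ) :
    iteratedDeriv n (fun t => f (t + a) - f t) =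
      fun t => iteratedDeriv n f (t + a) - iteratedDeriv n f t := by
  have hshift : ContDiff ℝ n fun t => f (t + a) := by fun_prop
  funext t
  rw [iteratedDeriv_fun_sub hshift.contDiffAt hf.contDiffAt, iteratedDeriv_comp_add_const]

/-- `f` has `n` continuous derivatives and `f⁽ⁿ⁾` is `K`-Lipschitz; this encodes `‖f⁽ⁿ⁺¹⁾‖ ≤ K`
for the essential supremum norm without reference to almost everywhere derivatives. -/
structure HasLipschitzIteratedDeriv (K : ℝ≥0) (n : ℕ) (f : ℝ → ℝ) : Prop where
  contDiff : ContDiff ℝ n f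
  lipschitz : LipschitzWith K (iteratedDeriv n f)

namespace HasLipschitzIteratedDeriv

variable {K : ℝ≥0} {n : ℕ} {f : ℝ → ℝ}

lemma differentiable (h : HasLipschitzIteratedDeriv K (n + 1) f) : Differentiable ℝ f :=
  h.contDiff.differentiable (by simp)

protected lemma deriv (h : HasLipschitzIteratedDeriv K (n + 1) f) :
    HasLipschitzIteratedDeriv K n (deriv f) where
  contDiff := (contDiff_succ_iff_deriv.1 (by exact_mod_cast h.contDiff)).2.2
  lipschitz := by
    rw [← iteratedDeriv_succ']
    exact h.lipschitz

lemma const_mul_comp_mul (h : HasLipschitzIteratedDeriv K n f) (a c : ℝ) :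
    HasLipschitzIteratedDeriv (‖a‖₊ * ‖c‖₊ ^ (n + 1) * K) n (fun t => a * f (c * t)) where
  contDiff := contDiff_const.mul (h.contDiff.comp (contDiff_const.mul contDiff_id))
  lipschitz := by
    have hc : LipschitzWith ‖c‖₊ fun t : ℝ => c * t := lipschitzWith_smul c
    have hcn : LipschitzWith ‖c ^ n‖₊ fun t : ℝ => c ^ n * t := lipschitzWith_smul (c ^ n)
    have ha : LipschitzWith ‖a‖₊ fun t : ℝ => a * t := lipschitzWith_smul a
    rw [iteratedDeriv_const_mul_comp_mul h.contDiff,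
      show ‖a‖₊ * ‖c‖₊ ^ (n + 1) * K = ‖a‖₊ * (‖c ^ n‖₊ * (K * ‖c‖₊)) by rw [nnnorm_pow]; ring]
    exact ha.comp (hcn.comp (h.lipschitz.comp hc))

lemma of_abs_iteratedDeriv_succ_le {C : ℝ} (hf : ContDiff ℝ (n + 1) f)
    (hC : ∀ t, |iteratedDeriv (n + 1) f t| ≤ C) :
    HasLipschitzIteratedDeriv C.toNNReal n f where
  contDiff := hf.of_le (by norm_cast; omega)
  lipschitz := by
    refine lipschitzWith_of_nnnorm_deriv_le
      (hf.differentiable_iteratedDeriv n (by norm_cast; omega)) fun t => ?_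
    rw [← iteratedDeriv_succ]
    exact NNReal.le_toNNReal_of_coe_le (hC t)

lemma comp_add_const_sub (h : HasLipschitzIteratedDeriv K (n + 1) f) (a : ℝ) :
    HasLipschitzIteratedDeriv (K * ‖a‖₊) n (fun t => f (t + a) - f t) := by
  have hcont : ContDiff ℝ (n + 1) fun t => f (t + a) - f t :=
    (h.contDiff.comp (contDiff_id.add contDiff_const)).sub h.contDiff
  rw [← Real.toNNReal_coe (r := K * ‖a‖₊)]
  refine of_abs_iteratedDeriv_succ_le hcont fun t => ?_
  rw [iteratedDeriv_comp_add_const_sub h.contDiff]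
  simpa [Real.dist_eq] using h.lipschitz.dist_le_mul (t + a) t

-- The increment `f (· + 1) - f` lies one order lower, and by the mean value theorem its `n`-th
-- derivative at `t` is a value of `f⁽ⁿ⁺¹⁾` within distance one of `t`.
lemma exists_abs_iteratedDeriv_le (h : HasLipschitzIteratedDeriv K n f)
    (hf : ∃ C, ∀ t, |f t| ≤ C) : ∃ C, ∀ t, |iteratedDeriv n f t| ≤ C := by
  induction n generalizing K f with
  | zero => simpa using hf
  | succ n ih =>
    obtain ⟨C, hC⟩ := hf
    obtain ⟨D, hD⟩ := ih (h.comp_add_const_sub 1)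
      ⟨C + C, fun t => (abs_sub _ _).trans (add_le_add (hC _) (hC _))⟩
    have hdiff : Differentiable ℝ (iteratedDeriv n f) :=
      h.contDiff.differentiable_iteratedDeriv n (by norm_cast; omega)
    refine ⟨D + K, fun t => ?_⟩
    obtain ⟨c, hc, hslope⟩ := exists_deriv_eq_slope (iteratedDeriv n f) (lt_add_one t)
      hdiff.continuous.continuousOn hdiff.differentiableOn
    have hmean : |iteratedDeriv (n + 1) f c| ≤ D := by
      have hDt := hD t
      rw [iteratedDeriv_comp_add_const_sub (h.contDiff.of_le (by norm_cast; omega))] at hDt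
      rwa [iteratedDeriv_succ, hslope, add_sub_cancel_left, div_one]
    have hnear : |iteratedDeriv (n + 1) f t - iteratedDeriv (n + 1) f c| ≤ K := by
      refine (h.lipschitz.dist_le_mul t c).trans (mul_le_of_le_one_right K.2 ?_)
      rw [Real.dist_eq, abs_sub_comm, abs_of_pos (sub_pos.2 hc.1)]
      linarith [hc.2]
    linarith [abs_sub_abs_le_abs_sub (iteratedDeriv (n + 1) f t) (iteratedDeriv (n + 1) f c)]

lemma exists_abs_deriv_le (h : HasLipschitzIteratedDeriv K (n + 1) f)
    (hf : ∃ C, ∀ t, |f t| ≤ C) : ∃ C, ∀ t, |deriv f t| ≤ C := by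
  induction n generalizing K with
  | zero => simpa using h.exists_abs_iteratedDeriv_le hf
  | succ n ih =>
    obtain ⟨C, hC⟩ := h.exists_abs_iteratedDeriv_le hf
    exact ih (of_abs_iteratedDeriv_succ_le (by exact_mod_cast h.contDiff) hC)

-- The function `t ↦ c⁻⁽ⁿ⁺²⁾ f (c t)` has a derivative bounded by `‖Φ_{n+1}‖`, hence a phase, while
-- its own norm is less than `‖Φ_{n+2}‖`.
lemma exists_abs_deriv_le_lt_of_one_lt
    (hphase : ∀ g, HasLipschitzIteratedDeriv 1 n g →
      (∀ t, |g t| ≤ centeredEuler (n + 1) (π / 2)) → ∃ θ, IsEulerPhase (n + 1) g θ)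
    (h : HasLipschitzIteratedDeriv 1 (n + 1) f)
    (hf : ∀ t, |f t| ≤ centeredEuler (n + 2) (π / 2)) {c : ℝ} (hc : 1 < c)
    (hf' : ∀ t, |deriv f t| ≤ c ^ (n + 1) * centeredEuler (n + 1) (π / 2)) :
    ∃ q < c ^ (n + 1) * centeredEuler (n + 1) (π / 2), ∀ t, |deriv f t| ≤ q := by
  have hc0 : 0 < c := one_pos.trans hc
  set F : ℝ → ℝ := fun t => (c ^ (n + 2))⁻¹ * f (c * t)
  have hF : HasLipschitzIteratedDeriv 1 (n + 1) F := by
    convert h.const_mul_comp_mul (c ^ (n + 2))⁻¹ c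
    rw [nnnorm_inv, nnnorm_pow, mul_one, inv_mul_cancel₀ (by simp [hc0.ne'])]
  have hF' (t : ℝ) : |deriv f (c * t)| = c ^ (n + 1) * |deriv F t| := by
    have hderiv : deriv F t = (c ^ (n + 2))⁻¹ * (c * deriv f (c * t)) := by
      rw [deriv_const_mul_field, deriv_comp_mul_left, smul_eq_mul]
    rw [hderiv, ← abs_of_pos (pow_pos hc0 (n + 1)), ← abs_mul]
    congr 1
    field_simp
    ring
  have hFpeak (t : ℝ) : |F t| ≤ (c ^ (n + 2))⁻¹ * centeredEuler (n + 2) (π / 2) := by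
    rw [abs_mul, abs_of_pos (by positivity)]
    gcongr
    exact hf _
  obtain ⟨θ, hθ⟩ := hphase _ hF.deriv fun t => by
    simpa only [hF', mul_le_mul_iff_right₀ (pow_pos hc0 (n + 1))] using hf' (c * t)
  obtain ⟨q, hqlt, hq⟩ := hθ.exists_abs_deriv_le_lt hF.differentiable hFpeak
    (mul_lt_of_lt_one_left (centeredEuler_pi_div_two_pos (n + 2))
      (inv_lt_one_of_one_lt₀ (one_lt_pow₀ hc (by omega))))
  refine ⟨c ^ (n + 1) * q, by gcongr, fun t => ?_⟩
  rw [← mul_inv_cancel_left₀ hc0.ne' t, hF']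
  gcongr
  exact hq _

lemma abs_deriv_le_of_exists_isEulerPhase
    (hphase : ∀ g, HasLipschitzIteratedDeriv 1 n g →
      (∀ t, |g t| ≤ centeredEuler (n + 1) (π / 2)) → ∃ θ, IsEulerPhase (n + 1) g θ)
    (h : HasLipschitzIteratedDeriv 1 (n + 1) f)
    (hf : ∀ t, |f t| ≤ centeredEuler (n + 2) (π / 2)) (t : ℝ) :
    |deriv f t| ≤ centeredEuler (n + 1) (π / 2) := by
  have hA := centeredEuler_pi_div_two_pos (n + 1)
  set A := centeredEuler (n + 1) (π / 2)
  obtain ⟨C, hC⟩ := h.exists_abs_deriv_le ⟨_, hf⟩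
  set m := ⨆ t, |deriv f t|
  have hle (t : ℝ) : |deriv f t| ≤ m :=
    le_ciSup (f := fun t => |deriv f t|) ⟨C, forall_mem_range.2 hC⟩ t
  refine (hle t).trans (le_of_not_gt fun hAm => ?_)
  have hone_lt : 1 < m / A := (one_lt_div hA).2 hAm
  obtain ⟨c, hc, hcm⟩ : ∃ c : ℝ, 1 < c ∧ c ^ (n + 1) * A = m := by
    refine ⟨(m / A) ^ ((n + 1 : ℕ) : ℝ)⁻¹, Real.one_lt_rpow hone_lt (by positivity), ?_⟩
    rw [Real.rpow_inv_natCast_pow (one_pos.trans hone_lt).le n.succ_ne_zero,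
      div_mul_cancel₀ m hA.ne']
  obtain ⟨q, hqm, hq⟩ :=
    exists_abs_deriv_le_lt_of_one_lt hphase h hf hc fun s => (hle s).trans_eq hcm.symm
  exact (hqm.trans_eq hcm).not_ge (ciSup_le hq)

theorem exists_isEulerPhase (h : HasLipschitzIteratedDeriv 1 n f)
    (hf : ∀ t, |f t| ≤ centeredEuler (n + 1) (π / 2)) : ∃ θ, IsEulerPhase (n + 1) f θ := by
  induction n generalizing f with
  | zero =>
    have hmem (t : ℝ) : f t ∈ Icc (-(π / 2)) (π / 2) := by
      have hft := hf t
      rw [zero_add, centeredEuler_one ⟨by linarith [Real.pi_pos], le_rfl⟩] at hft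
      exact abs_le.1 hft
    exact ⟨f, by simpa using h.lipschitz, hmem, fun t => (centeredEuler_one (hmem t)).symm⟩
  | succ n ih =>
    obtain ⟨θ, hθ⟩ := ih h.deriv
      (abs_deriv_le_of_exists_isEulerPhase (fun _ hg hgA => ih hg hgA) h hf)
    exact hθ.exists_of_deriv h.differentiable hf

lemma abs_iteratedDeriv_le_centeredEuler {k : ℕ} (h : HasLipschitzIteratedDeriv 1 (n + k) f)
    (hf : ∀ t, |f t| ≤ centeredEuler (n + k + 1) (π / 2)) (t : ℝ) :
    |iteratedDeriv k f t| ≤ centeredEuler (n + 1) (π / 2) := by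
  induction k generalizing f with
  | zero => simpa using hf t
  | succ k ih =>
    rw [iteratedDeriv_succ']
    exact ih h.deriv (abs_deriv_le_of_exists_isEulerPhase (fun _ => exists_isEulerPhase) h hf)

lemma abs_iteratedDeriv_le_div_pow {k : ℕ} {lam : ℝ} (hK : 0 < K) (hlam : 0 < lam)
    (h : HasLipschitzIteratedDeriv K (n + k) f)
    (hf : ∀ t, |f t| ≤ K * centeredEuler (n + k + 1) (π / 2) / lam ^ (n + k + 1)) (t : ℝ) :
    |iteratedDeriv k f t| ≤ K * centeredEuler (n + 1) (π / 2) / lam ^ (n + 1) := by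
  set a : ℝ := lam ^ (n + k + 1) / K with ha
  have ha0 : 0 < a := by positivity
  have hscaled : HasLipschitzIteratedDeriv 1 (n + k) fun t => a * f (lam⁻¹ * t) := by
    convert h.const_mul_comp_mul a lam⁻¹
    rw [← NNReal.coe_inj]
    simp only [NNReal.coe_mul, NNReal.coe_pow, coe_nnnorm, Real.norm_of_nonneg ha0.le,
      Real.norm_of_nonneg (inv_pos.2 hlam).le, NNReal.coe_one]
    rw [ha, inv_pow]
    field_simp
  have hbound (s : ℝ) : |a * f (lam⁻¹ * s)| ≤ centeredEuler (n + k + 1) (π / 2) := by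
    rw [abs_mul, abs_of_pos ha0, ← le_div_iff₀' ha0]
    refine (hf _).trans_eq ?_
    rw [ha]
    field_simp
  have hk := hscaled.abs_iteratedDeriv_le_centeredEuler hbound (lam * t)
  have hcont : ContDiff ℝ k f := h.contDiff.of_le (by norm_cast; omega)
  simp only [iteratedDeriv_const_mul_comp_mul hcont,
    inv_mul_cancel_left₀ hlam.ne'] at hk
  rw [← mul_assoc, abs_mul, abs_of_pos (by positivity), ← le_div_iff₀' (by positivity)] at hk
  refine hk.trans_eq ?_
  rw [ha, show n + k + 1 = n + 1 + k by omega, pow_add, inv_pow]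
  field_simp

lemma abs_iteratedDeriv_le_rpow {k : ℕ} {D : ℝ} (hK : 0 < K) (hD : 0 < D)
    (h : HasLipschitzIteratedDeriv K (n + k) f) (hf : ∀ t, |f t| ≤ D) (t : ℝ) :
    |iteratedDeriv k f t| ≤
      centeredEuler (n + 1) (π / 2) /
          centeredEuler (n + k + 1) (π / 2) ^ (1 - (k : ℝ) / (n + k + 1 : ℕ)) *
        D ^ (1 - (k : ℝ) / (n + k + 1 : ℕ)) * (K : ℝ) ^ ((k : ℝ) / (n + k + 1 : ℕ)) := by
  have hK' : (0 : ℝ) < K := hK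
  have hA := centeredEuler_pi_div_two_pos (n + k + 1)
  set A := centeredEuler (n + k + 1) (π / 2)
  set p : ℝ := 1 - (k : ℝ) / (n + k + 1 : ℕ) with hp
  set lam : ℝ := (K * A / D) ^ ((n + k + 1 : ℕ) : ℝ)⁻¹ with hlam
  have hlam_pow : lam ^ (n + k + 1) = K * A / D :=
    Real.rpow_inv_natCast_pow (by positivity) (by omega)
  have hlam_pow' : lam ^ (n + 1) = (K * A / D) ^ p := by
    rw [hlam, ← Real.rpow_mul_natCast (by positivity)]
    congr 1
    rw [hp]
    push_cast
    field_simp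
    ring
  have hDlam (s : ℝ) : |f s| ≤ K * A / lam ^ (n + k + 1) := by
    rw [hlam_pow, div_div_cancel₀ (by positivity)]
    exact hf s
  refine (h.abs_iteratedDeriv_le_div_pow hK (by positivity) hDlam t).trans_eq ?_
  have hKp : (K : ℝ) = K ^ p * K ^ ((k : ℝ) / (n + k + 1 : ℕ)) := by
    rw [← Real.rpow_add hK', hp, sub_add_cancel, Real.rpow_one]
  rw [hlam_pow', Real.div_rpow (by positivity) hD.le, Real.mul_rpow hK'.le hA.le]
  nth_rewrite 1 [hKp]
  field_simp

end HasLipschitzIteratedDeriv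

lemma abs_le_unif {f : ℝ → ℝ} (hf : ∃ C, ∀ t, |f t| ≤ C) (t : ℝ) : |f t| ≤ unif f :=
  let ⟨C, hC⟩ := hf
  le_ciSup (f := fun t => |f t|) ⟨C, forall_mem_range.2 hC⟩ t

lemma lipschitzWith_of_abs_deriv_le {K : ℝ≥0} {g : ℝ → ℝ} {C : ℝ} (hg : LipschitzWith K g)
    (hC : ∀ t, |deriv g t| ≤ C) : LipschitzWith C.toNNReal g := by
  refine LipschitzWith.of_dist_le' fun x y => ?_
  have hac : AbsolutelyContinuousOnInterval g y x :=
    hg.lipschitzOnWith.absolutelyContinuousOnInterval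
  rw [Real.dist_eq, ← hac.integral_deriv_eq_sub]
  exact intervalIntegral.norm_integral_le_of_norm_le_const (f := deriv g) fun u _ => hC u

namespace MemL

variable {n : ℕ} {f : ℝ → ℝ}

lemma abs_le_M_zero {r : ℕ} (hf : MemL r f) (t : ℝ) : |f t| ≤ M 0 f := by
  rw [M, iteratedDeriv_zero]
  exact abs_le_unif hf.2.1 t

lemma hasLipschitzIteratedDeriv (hf : MemL (n + 1) f) :
    HasLipschitzIteratedDeriv (M (n + 1) f).toNNReal n f := by
  obtain ⟨-, -, hcont, K, hK⟩ := hf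
  rw [Nat.add_sub_cancel] at hcont hK
  have hderiv : M (n + 1) f = unif (deriv (iteratedDeriv n f)) := by rw [M, iteratedDeriv_succ]
  exact ⟨hcont, hderiv ▸ lipschitzWith_of_abs_deriv_le hK
    (abs_le_unif ⟨K, fun t => norm_deriv_le_of_lipschitz hK⟩)⟩

-- Perturbing both norms by `ε` makes them positive, as needed to solve for the scaling parameter.
lemma abs_iteratedDeriv_le {k : ℕ} (hf : MemL (n + k + 1) f) (t : ℝ) :
    |iteratedDeriv k f t| ≤
      centeredEuler (n + 1) (π / 2) /
          centeredEuler (n + k + 1) (π / 2) ^ (1 - (k : ℝ) / (n + k + 1 : ℕ)) *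
        M 0 f ^ (1 - (k : ℝ) / (n + k + 1 : ℕ)) *
        M (n + k + 1) f ^ ((k : ℝ) / (n + k + 1 : ℕ)) := by
  have hM0 : 0 ≤ M 0 f := (abs_nonneg _).trans (hf.abs_le_M_zero 0)
  have hMr : 0 ≤ M (n + k + 1) f := Real.iSup_nonneg fun _ => abs_nonneg _
  have hlip := hf.hasLipschitzIteratedDeriv
  have hexp : 0 ≤ (k : ℝ) / (n + k + 1 : ℕ) := by positivity
  have hexp' : 0 ≤ 1 - (k : ℝ) / (n + k + 1 : ℕ) := by
    rw [sub_nonneg, div_le_one (by positivity)]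
    exact_mod_cast (by omega : k ≤ n + k + 1)
  have hcont : Continuous fun ε : ℝ =>
      centeredEuler (n + 1) (π / 2) /
          centeredEuler (n + k + 1) (π / 2) ^ (1 - (k : ℝ) / (n + k + 1 : ℕ)) *
        (M 0 f + ε) ^ (1 - (k : ℝ) / (n + k + 1 : ℕ)) *
        (M (n + k + 1) f + ε) ^ ((k : ℝ) / (n + k + 1 : ℕ)) :=
    (continuous_const.mul ((continuous_const_add _).rpow_const fun _ => .inr hexp')).mul
      ((continuous_const_add _).rpow_const fun _ => .inr hexp)
  have hlim := (hcont.tendsto 0).mono_left (nhdsWithin_le_nhds (s := Ioi 0))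
  simp only [add_zero] at hlim
  refine ge_of_tendsto hlim ?_
  filter_upwards [self_mem_nhdsWithin] with ε (hε : 0 < ε)
  have hpos : 0 < M (n + k + 1) f + ε := by linarith
  have hlip_ε : HasLipschitzIteratedDeriv (M (n + k + 1) f + ε).toNNReal (n + k) f :=
    ⟨hlip.contDiff, hlip.lipschitz.weaken (Real.toNNReal_mono (by linarith))⟩
  have hε_bound := hlip_ε.abs_iteratedDeriv_le_rpow (Real.toNNReal_pos.2 hpos)
    (D := M 0 f + ε) (by linarith) (fun s => (hf.abs_le_M_zero s).trans (by linarith)) t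
  rwa [Real.coe_toNNReal _ hpos.le] at hε_bound

end MemL

end

/-- **Kolmogorov's inequality.** For `0 < k < r` and `f ∈ L^r_{∞,∞}`, the derivative
`f⁽ᵏ⁾` is bounded and
`M_k(f) ≤ (‖φ_{r-k}‖ / ‖φ_r‖^{1-k/r}) · M_0(f)^{1-k/r} · M_r(f)^{k/r}`. -/
theorem stmt4 (k r : ℕ) (hk : 0 < k) (hkr : k < r) (f : ℝ → ℝ) (hf : MemL r f) :
    (∃ C : ℝ, ∀ t : ℝ, |iteratedDeriv k f t| ≤ C) ∧
    M k f ≤ (unif (eulerPhi (r - k)) / (unif (eulerPhi r)) ^ (1 - (k:ℝ)/(r:ℝ))) *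
      (M 0 f) ^ (1 - (k:ℝ)/(r:ℝ)) * (M r f) ^ ((k:ℝ)/(r:ℝ)) := by
  obtain ⟨n, rfl⟩ : ∃ n, r = n + k + 1 := ⟨r - k - 1, by omega⟩
  rw [show n + k + 1 - k = n + 1 by omega, unif_eulerPhi_succ, unif_eulerPhi_succ]
  exact ⟨⟨_, hf.abs_iteratedDeriv_le⟩, ciSup_le hf.abs_iteratedDeriv_le⟩
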